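/- Let K be a nonempty finite index set, let T : ℝ → ℝ be differentiable with T(t) > 0 for all t, and for each k ∈ K let Ψ_k : ℝ → ℝ be differentiable. Suppose the functions p_k(t) := exp(Ψ_k(t)/T(t)) satisfy the normalization Σ_{k∈K} p_k(t) = 1 for all t. Define the ensemble averages ⟨Ψ⟩(t) := Σ_k p_k(t) Ψ_k(t) and ⟨Ψ'⟩(t) := Σ_k p_k(t) Ψ_k'(t). Then for every t with ⟨Ψ⟩(t) ≠ 0, the temperature change obeys T'(t) = T(t) · ⟨Ψ'⟩(t) / ⟨Ψ⟩(t). -/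

import Mathlib

open Finset

/-!
The numerator `T dΨ - Ψ dT` of `d(Ψ / T)` is linear in the pair `(Ψ, dΨ)`, so it commutes with
weighted sums. Hence the derivative of `∑ φ_k(Ψ_k / T)`, with weights `w_k = φ_k'(Ψ_k / T)`, is
`(T ⟨dΨ⟩ - ⟨Ψ⟩ dT) / T²`, and it vanishes under the normalization. The exponential enters only
through `exp' = exp`, which makes the weights `w_k` the probabilities themselves.
-/

section

variable {𝕜 𝕂 K : Type*} [NontriviallyNormedField 𝕜] [NontriviallyNormedField 𝕂]
  [NormedAlgebra 𝕜 𝕂] {s : Finset K} {φ : K → 𝕂 → 𝕂} {w Ψ' : K → 𝕂} {Ψ : K → 𝕜 → 𝕂}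
  {T : 𝕜 → 𝕂} {T' : 𝕂} {t : 𝕜}

theorem hasDerivAt_sum_comp_div (hT : HasDerivAt T T' t) (hT₀ : T t ≠ 0)
    (hΨ : ∀ k ∈ s, HasDerivAt (Ψ k) (Ψ' k) t)
    (hφ : ∀ k ∈ s, HasDerivAt (φ k) (w k) (Ψ k t / T t)) :
    HasDerivAt (fun u => ∑ k ∈ s, φ k (Ψ k u / T u))
      ((T t * ∑ k ∈ s, w k * Ψ' k - T' * ∑ k ∈ s, w k * Ψ k t) / T t ^ 2) t := by
  have termwise : HasDerivAt (fun u => ∑ k ∈ s, φ k (Ψ k u / T u))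
      (∑ k ∈ s, w k * ((Ψ' k * T t - Ψ k t * T') / T t ^ 2)) t :=
    HasDerivAt.fun_sum fun k hk => (hφ k hk).comp t ((hΨ k hk).fun_div hT hT₀)
  convert termwise using 1
  rw [mul_sum, mul_sum, ← sum_sub_distrib, sum_div]
  exact sum_congr rfl fun k _ => by ring

theorem temperature_change_of_normalized_exponential_probabilities_general
    (hT : HasDerivAt T T' t) (hT₀ : T t ≠ 0)
    (hΨ : ∀ k ∈ s, HasDerivAt (Ψ k) (Ψ' k) t)
    (hφ : ∀ k ∈ s, HasDerivAt (φ k) (w k) (Ψ k t / T t))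
    (hstationary : HasDerivAt (fun u => ∑ k ∈ s, φ k (Ψ k u / T u)) 0 t)
    (havg : ∑ k ∈ s, w k * Ψ k t ≠ 0) :
    T' = T t * (∑ k ∈ s, w k * Ψ' k) / ∑ k ∈ s, w k * Ψ k t := by
  have hquot : (T t * ∑ k ∈ s, w k * Ψ' k - T' * ∑ k ∈ s, w k * Ψ k t) / T t ^ 2 = 0 :=
    (hasDerivAt_sum_comp_div hT hT₀ hΨ hφ).unique hstationary
  have hnum : T t * ∑ k ∈ s, w k * Ψ' k - T' * ∑ k ∈ s, w k * Ψ k t = 0 :=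
    (div_eq_zero_iff.mp hquot).resolve_right (pow_ne_zero 2 hT₀)
  exact eq_div_of_mul_eq havg (sub_eq_zero.mp hnum).symm

end

/-- Theorem 1 of the paper: for internal-equilibrium probabilities
`p_k(t) = exp(Ψ_k(t)/T(t))` with normalization `∑_k p_k(t) = 1`, the temperature change
obeys `dT = T ⟨dΨ⟩/⟨Ψ⟩` whenever `⟨Ψ⟩ ≠ 0`. -/
theorem temperature_change_of_normalized_exponential_probabilities
    {K : Type*} [Fintype K] [Nonempty K]
    (T : ℝ → ℝ) (hT : Differentiable ℝ T) (hTpos : ∀ t, 0 < T t)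
    (Ψ : K → ℝ → ℝ) (hΨ : ∀ k, Differentiable ℝ (Ψ k))
    (hnorm : ∀ t, ∑ k : K, Real.exp (Ψ k t / T t) = 1)
    (t : ℝ)
    (havg : (∑ k : K, Real.exp (Ψ k t / T t) * Ψ k t) ≠ 0) :
    deriv T t =
      T t * (∑ k : K, Real.exp (Ψ k t / T t) * deriv (Ψ k) t) /
        (∑ k : K, Real.exp (Ψ k t / T t) * Ψ k t) := by
  exact temperature_change_of_normalized_exponential_probabilities_general (hT t).hasDerivAt
    (hTpos t).ne' (fun k _ => (hΨ k t).hasDerivAt) (fun k _ => Real.hasDerivAt_exp (Ψ k t / T t))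
    (by simpa only [hnorm] using hasDerivAt_const t (1 : ℝ)) havg
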